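/- Fix d ∈ ℕ, a smooth function U : ℝ^d → ℝ with ‖∇²U‖_∞ < ∞, and a constant σ > 0, and let L be the kinetic Langevin operator L h = −y·∇_x h + (∇U(x) − y/σ)·∇_y h + Δ_y h. Then for every smooth h : ℝ^d × ℝ^d → ℝ, pointwise on ℝ^d × ℝ^d, (1/2) L(|∇h|²) − ∇h·∇(Lh) ≥ −(‖∇²U‖_∞ + 1 + 1/σ) |∇h|², where ∇ = (∇_x, ∇_y) is the full gradient in the 2d variables. -/

import Mathlib

noncomputable section

open scoped BigOperators

open scoped BigOperators

/-- Partial derivative in the `i`-th `x`-direction of `f : ℝ^d × ℝ^d → ℝ`. -/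
def pdx {d : ℕ} (i : Fin d) (f : (Fin d → ℝ) × (Fin d → ℝ) → ℝ)
    (z : (Fin d → ℝ) × (Fin d → ℝ)) : ℝ :=
  fderiv ℝ f z (Pi.single i (1 : ℝ), 0)

/-- Partial derivative in the `i`-th `y`-direction of `f : ℝ^d × ℝ^d → ℝ`. -/
def pdy {d : ℕ} (i : Fin d) (f : (Fin d → ℝ) × (Fin d → ℝ) → ℝ)
    (z : (Fin d → ℝ) × (Fin d → ℝ)) : ℝ :=
  fderiv ℝ f z (0, Pi.single i (1 : ℝ))

/-- `i`-th component of `∇U`. -/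
def gradU {d : ℕ} (U : (Fin d → ℝ) → ℝ) (i : Fin d) (x : Fin d → ℝ) : ℝ :=
  fderiv ℝ U x (Pi.single i (1 : ℝ))

/-- `(i,j)` entry of the Hessian matrix `∇²U`. -/
def hessU {d : ℕ} (U : (Fin d → ℝ) → ℝ) (i j : Fin d) (x : Fin d → ℝ) : ℝ :=
  fderiv ℝ (fun u => fderiv ℝ U u (Pi.single j (1 : ℝ))) x (Pi.single i (1 : ℝ))

/-- The kinetic Langevin operator `L h = −y·∇ₓh + (∇U(x) − y/σ)·∇_y h + Δ_y h`. -/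
def langevin {d : ℕ} (U : (Fin d → ℝ) → ℝ) (σ : ℝ)
    (f : (Fin d → ℝ) × (Fin d → ℝ) → ℝ) (z : (Fin d → ℝ) × (Fin d → ℝ)) : ℝ :=
  (∑ i, -(z.2 i) * pdx i f z)
    + (∑ i, (gradU U i z.1 - z.2 i / σ) * pdy i f z)
    + ∑ i, pdy i (fun w => pdy i f w) z

/-- The supremum over x of the Frobenius norm of the Hessian of U, i.e. ‖∇²U‖_∞. -/
def hessNormInf {d : ℕ} (U : (Fin d → ℝ) → ℝ) : ℝ :=
  ⨆ x : Fin d → ℝ, Real.sqrt (∑ i, ∑ j, (hessU U i j x) ^ 2)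

/-!
Write `L f = D f(b) + ∑ₖ ∂ₑₖ² f` for a drift `b` and constant directions `eₖ`. A constant direction
`v` commutes with the second order part, so `∂ᵥ (L f) = L (∂ᵥ f) + D f(D b(v))`, while
`L (g²) = 2 g L g + 2 ∑ₖ (∂ₑₖ g)²`. Applying the second identity to `g = ∂ᵥ f` and summing over `v`,
the third derivatives of `f` cancel and
`½ L |∇f|² - ∇f · ∇(L f) = ∑ᵥ ∑ₖ (∂ₑₖ ∂ᵥ f)² - ∑ᵥ ∂ᵥ f · D f(D b(v))`.
For the Langevin drift `b = (-y, ∇U - y / σ)` the last sum is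
`∇ₓf · ∇²U ∇_y f - ∇ₓf · ∇_y f - |∇_y f|² / σ`, and Cauchy-Schwarz bounds it by
`½ (‖∇²U‖ + 1) |∇f|²`.
-/

open Finset

section DirDeriv

variable {E F ι : Type*} [NormedAddCommGroup E] [NormedSpace ℝ E]
  [NormedAddCommGroup F] [NormedSpace ℝ F]

/-- The derivative `∂ᵥ f` of `f` in the constant direction `v`, as an operator on functions so that
it can be iterated. It is the Fréchet derivative applied to `v`, hence linear in `v` for every `f`,
and zero where `f` is not differentiable. -/
def dirDeriv (v : E) (f : E → F) (z : E) : F :=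
  fderiv ℝ f z v

theorem contDiff_dirDeriv {m n : WithTop ℕ∞} (v : E) {f : E → F} (hf : ContDiff ℝ n f)
    (hmn : m + 1 ≤ n) : ContDiff ℝ m (dirDeriv v f) :=
  (hf.fderiv_right hmn).clm_apply contDiff_const

theorem differentiable_dirDeriv (v : E) {f : E → F} (hf : ContDiff ℝ 2 f) :
    Differentiable ℝ (dirDeriv v f) :=
  (contDiff_dirDeriv (m := 1) v hf one_add_one_eq_two.le).differentiable one_ne_zero

theorem differentiable_fderiv {f : E → F} (hf : ContDiff ℝ 2 f) : Differentiable ℝ (fderiv ℝ f) :=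
  (hf.fderiv_right (m := 1) one_add_one_eq_two.le).differentiable one_ne_zero

theorem dirDeriv_dirDeriv (v w : E) {f : E → F} (hf : ContDiff ℝ 2 f) (z : E) :
    dirDeriv v (dirDeriv w f) z = fderiv ℝ (fderiv ℝ f) z v w := by
  unfold dirDeriv
  simp [fderiv_clm_apply (differentiable_fderiv hf z) (differentiableAt_const w)]

theorem dirDeriv_comm (v w : E) {f : E → F} (hf : ContDiff ℝ 2 f) :
    dirDeriv v (dirDeriv w f) = dirDeriv w (dirDeriv v f) := by
  funext z
  have symm : IsSymmSndFDerivAt ℝ f z := hf.contDiffAt.isSymmSndFDerivAt (by simp)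
  simpa only [dirDeriv_dirDeriv _ _ hf] using symm v w

theorem dirDeriv_add (v : E) {f g : E → F} {z : E} (hf : DifferentiableAt ℝ f z)
    (hg : DifferentiableAt ℝ g z) :
    dirDeriv v (fun w => f w + g w) z = dirDeriv v f z + dirDeriv v g z := by
  simp [dirDeriv, fderiv_fun_add hf hg]

theorem dirDeriv_sum (v : E) (s : Finset ι) {f : ι → E → F} {z : E}
    (hf : ∀ i ∈ s, DifferentiableAt ℝ (f i) z) :
    dirDeriv v (fun w => ∑ i ∈ s, f i w) z = ∑ i ∈ s, dirDeriv v (f i) z := by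
  simp [dirDeriv, fderiv_fun_sum hf]

theorem dirDeriv_mul (v : E) {f g : E → ℝ} {z : E} (hf : DifferentiableAt ℝ f z)
    (hg : DifferentiableAt ℝ g z) :
    dirDeriv v (fun w => f w * g w) z = f z * dirDeriv v g z + g z * dirDeriv v f z := by
  simp [dirDeriv, fderiv_fun_mul hf hg]

theorem dirDeriv_sq (v : E) {f : E → ℝ} {z : E} (hf : DifferentiableAt ℝ f z) :
    dirDeriv v (fun w => f w ^ 2) z = 2 * (f z * dirDeriv v f z) := by
  simp only [sq, dirDeriv_mul v hf hf]
  ring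

theorem dirDeriv_dirDeriv_sq (v : E) {f : E → ℝ} (hf : ContDiff ℝ 2 f) (z : E) :
    dirDeriv v (dirDeriv v (fun w => f w ^ 2)) z =
      2 * (f z * dirDeriv v (dirDeriv v f) z) + 2 * dirDeriv v f z ^ 2 := by
  have df : Differentiable ℝ f := hf.differentiable two_ne_zero
  have ddf : Differentiable ℝ (dirDeriv v f) := differentiable_dirDeriv v hf
  have first : dirDeriv v (fun w => f w ^ 2) =
      fun w => f w * dirDeriv v f w + f w * dirDeriv v f w :=
    funext fun w => by rw [dirDeriv_sq v (df w), two_mul]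
  rw [first, dirDeriv_add v ((df z).fun_mul (ddf z)) ((df z).fun_mul (ddf z)),
    dirDeriv_mul v (df z) (ddf z)]
  ring

theorem dirDeriv_dirDeriv_vectorField (v : E) {b : E → E} {f : E → F} {z : E}
    (hb : DifferentiableAt ℝ b z) (hf : ContDiff ℝ 2 f) :
    dirDeriv v (fun w => dirDeriv (b w) f w) z =
      dirDeriv (b z) (dirDeriv v f) z + dirDeriv (dirDeriv v b z) f z := by
  rw [dirDeriv_comm _ _ hf, dirDeriv_dirDeriv _ _ hf]
  unfold dirDeriv
  simp [fderiv_clm_apply (differentiable_fderiv hf z) hb, add_comm]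

end DirDeriv

section DiffusionOp

variable {E ι κ : Type*} [NormedAddCommGroup E] [NormedSpace ℝ E] [Fintype ι]

/-- The diffusion operator `L f = D f(b) + ∑ₖ ∂ₑₖ² f` with drift `b` and constant diffusion
directions `e`, which need not span: `L` may be degenerate, as the Langevin operator is. -/
def diffusionOp (b : E → E) (e : ι → E) (f : E → ℝ) (z : E) : ℝ :=
  dirDeriv (b z) f z + ∑ k, dirDeriv (e k) (dirDeriv (e k) f) z

variable {b : E → E} {e : ι → E}

theorem diffusionOp_sum (s : Finset κ) {f : κ → E → ℝ} (hf : ∀ j ∈ s, ContDiff ℝ 2 (f j)) (z : E) :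
    diffusionOp b e (fun w => ∑ j ∈ s, f j w) z = ∑ j ∈ s, diffusionOp b e (f j) z := by
  have first (v : E) :
      dirDeriv v (fun w => ∑ j ∈ s, f j w) = fun w => ∑ j ∈ s, dirDeriv v (f j) w :=
    funext fun w => dirDeriv_sum v s fun j hj => (hf j hj).differentiable two_ne_zero w
  have second (v : E) : dirDeriv v (dirDeriv v (fun w => ∑ j ∈ s, f j w)) z =
      ∑ j ∈ s, dirDeriv v (dirDeriv v (f j)) z := by
    rw [first, dirDeriv_sum v s fun j hj => differentiable_dirDeriv v (hf j hj) z]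
  simp only [diffusionOp, second]
  rw [first, sum_comm, sum_add_distrib]

theorem diffusionOp_sq {f : E → ℝ} (hf : ContDiff ℝ 2 f) (z : E) :
    diffusionOp b e (fun w => f w ^ 2) z =
      2 * (f z * diffusionOp b e f z) + 2 * ∑ k, dirDeriv (e k) f z ^ 2 := by
  simp only [diffusionOp, dirDeriv_sq _ (hf.differentiable two_ne_zero z),
    dirDeriv_dirDeriv_sq _ hf, sum_add_distrib, ← mul_sum]
  ring

theorem dirDeriv_diffusionOp (v : E) {f : E → ℝ} {z : E} (hb : DifferentiableAt ℝ b z)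
    (hf : ContDiff ℝ 3 f) :
    dirDeriv v (diffusionOp b e f) z =
      diffusionOp b e (dirDeriv v f) z + dirDeriv (dirDeriv v b z) f z := by
  have hf₂ : ContDiff ℝ 2 f := hf.of_le (by norm_num)
  have hdf (w : E) : ContDiff ℝ 2 (dirDeriv w f) := contDiff_dirDeriv w hf (by norm_num)
  have diff_drift : DifferentiableAt ℝ (fun w => dirDeriv (b w) f w) z :=
    (differentiable_fderiv hf₂ z).clm_apply hb
  have diff_snd (k : ι) : DifferentiableAt ℝ (dirDeriv (e k) (dirDeriv (e k) f)) z :=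
    differentiable_dirDeriv (e k) (hdf (e k)) z
  have comm_snd (k : ι) : dirDeriv v (dirDeriv (e k) (dirDeriv (e k) f)) =
      dirDeriv (e k) (dirDeriv (e k) (dirDeriv v f)) := by
    rw [dirDeriv_comm v _ (hdf (e k)), dirDeriv_comm v _ hf₂]
  calc dirDeriv v (diffusionOp b e f) z
    _ = dirDeriv v (fun w => dirDeriv (b w) f w) z +
          ∑ k, dirDeriv v (dirDeriv (e k) (dirDeriv (e k) f)) z := by
      rw [← dirDeriv_sum v univ fun k _ => diff_snd k,
        ← dirDeriv_add v diff_drift (DifferentiableAt.fun_sum fun k _ => diff_snd k)]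
      rfl
    _ = diffusionOp b e (dirDeriv v f) z + dirDeriv (dirDeriv v b z) f z := by
      simp only [dirDeriv_dirDeriv_vectorField v hb hf₂, comm_snd, diffusionOp]
      ring

theorem half_diffusionOp_sum_sq_dirDeriv_sub [Fintype κ] (v : κ → E) {f : E → ℝ} {z : E}
    (hb : DifferentiableAt ℝ b z) (hf : ContDiff ℝ 3 f) :
    1 / 2 * diffusionOp b e (fun w => ∑ j, dirDeriv (v j) f w ^ 2) z -
        ∑ j, dirDeriv (v j) f z * dirDeriv (v j) (diffusionOp b e f) z =
      ∑ j, ∑ k, dirDeriv (e k) (dirDeriv (v j) f) z ^ 2 -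
        ∑ j, dirDeriv (v j) f z * dirDeriv (dirDeriv (v j) b z) f z := by
  have hdf (j : κ) : ContDiff ℝ 2 (dirDeriv (v j) f) := contDiff_dirDeriv (v j) hf (by norm_num)
  rw [diffusionOp_sum univ (fun j _ => (hdf j).pow 2), mul_sum, ← sum_sub_distrib,
    ← sum_sub_distrib]
  refine sum_congr rfl fun j _ => ?_
  rw [diffusionOp_sq (hdf j), dirDeriv_diffusionOp (v j) hb hf]
  ring

end DiffusionOp

theorem sum_sum_mul_le_sqrt_sum_sq {m n : Type*} [Fintype m] [Fintype n] (A : m → n → ℝ)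
    (a : m → ℝ) (b : n → ℝ) :
    ∑ i, ∑ j, a i * (A i j * b j) ≤
      √(∑ i, ∑ j, A i j ^ 2) * ((∑ i, a i ^ 2 + ∑ j, b j ^ 2) / 2) := by
  have cauchy_schwarz :
      ∑ i, ∑ j, A i j * (a i * b j) ≤ √(∑ i, ∑ j, A i j ^ 2) * √(∑ i, ∑ j, (a i * b j) ^ 2) := by
    simpa only [Fintype.sum_prod_type] using
      Real.sum_mul_le_sqrt_mul_sqrt univ (fun p : m × n => A p.1 p.2) (fun p => a p.1 * b p.2)
  have sum_sq_mul : ∑ i, ∑ j, (a i * b j) ^ 2 = (∑ i, a i ^ 2) * ∑ j, b j ^ 2 := by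
    simp only [mul_pow, sum_mul_sum]
  have am_gm : √((∑ i, a i ^ 2) * ∑ j, b j ^ 2) ≤ (∑ i, a i ^ 2 + ∑ j, b j ^ 2) / 2 :=
    Real.sqrt_le_iff.2 ⟨by positivity, by nlinarith [sq_nonneg (∑ i, a i ^ 2 - ∑ j, b j ^ 2)]⟩
  calc ∑ i, ∑ j, a i * (A i j * b j)
    _ = ∑ i, ∑ j, A i j * (a i * b j) := by simp only [mul_left_comm]
    _ ≤ √(∑ i, ∑ j, A i j ^ 2) * √((∑ i, a i ^ 2) * ∑ j, b j ^ 2) := sum_sq_mul ▸ cauchy_schwarz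
    _ ≤ √(∑ i, ∑ j, A i j ^ 2) * ((∑ i, a i ^ 2 + ∑ j, b j ^ 2) / 2) := by gcongr

section Langevin

variable {d : ℕ}

/-- The coordinate direction `∂/∂xᵢ` of phase space, so that `pdx i` is `dirDeriv (xDir i)`. -/
def xDir (i : Fin d) : (Fin d → ℝ) × (Fin d → ℝ) :=
  (Pi.single i 1, 0)

/-- The coordinate direction `∂/∂yᵢ` of phase space, so that `pdy i` is `dirDeriv (yDir i)`. -/
def yDir (i : Fin d) : (Fin d → ℝ) × (Fin d → ℝ) :=
  (0, Pi.single i 1)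

/-- The drift `(-y, ∇U(x) - y / σ)` of the kinetic Langevin operator. -/
def langevinDrift (U : (Fin d → ℝ) → ℝ) (σ : ℝ) (z : (Fin d → ℝ) × (Fin d → ℝ)) :
    (Fin d → ℝ) × (Fin d → ℝ) :=
  (-z.2, fun i => gradU U i z.1 - z.2 i / σ)

theorem dirDeriv_eq_sum_pdx_add_sum_pdy (v : (Fin d → ℝ) × (Fin d → ℝ))
    (f : (Fin d → ℝ) × (Fin d → ℝ) → ℝ) (z : (Fin d → ℝ) × (Fin d → ℝ)) :
    dirDeriv v f z = ∑ i, v.1 i * pdx i f z + ∑ i, v.2 i * pdy i f z := by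
  have decomp : v = ∑ i, v.1 i • xDir i + ∑ i, v.2 i • yDir i := by
    ext j <;> simp [xDir, yDir, Prod.fst_sum, Prod.snd_sum, Pi.single_apply]
  calc dirDeriv v f z
    _ = fderiv ℝ f z (∑ i, v.1 i • xDir i + ∑ i, v.2 i • yDir i) := by rw [← decomp, dirDeriv]
    _ = ∑ i, v.1 i * pdx i f z + ∑ i, v.2 i * pdy i f z := by
      simp only [map_add, map_sum, map_smul, smul_eq_mul]
      rfl

theorem langevin_eq_diffusionOp (U : (Fin d → ℝ) → ℝ) (σ : ℝ)
    (f : (Fin d → ℝ) × (Fin d → ℝ) → ℝ) :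
    langevin U σ f = diffusionOp (langevinDrift U σ) yDir f := by
  funext z
  rw [diffusionOp, dirDeriv_eq_sum_pdx_add_sum_pdy]
  rfl

theorem differentiable_gradU {U : (Fin d → ℝ) → ℝ} (hU : ContDiff ℝ 2 U) (i : Fin d) :
    Differentiable ℝ (gradU U i) :=
  differentiable_dirDeriv (Pi.single i 1) hU

theorem hasFDerivAt_langevinDrift {U : (Fin d → ℝ) → ℝ} (hU : ContDiff ℝ 2 U) (σ : ℝ)
    (z : (Fin d → ℝ) × (Fin d → ℝ)) :
    HasFDerivAt (langevinDrift U σ)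
      ((-ContinuousLinearMap.snd ℝ (Fin d → ℝ) (Fin d → ℝ)).prod
        (ContinuousLinearMap.pi fun i =>
          (fderiv ℝ (gradU U i) z.1).comp (ContinuousLinearMap.fst ℝ (Fin d → ℝ) (Fin d → ℝ)) -
            σ⁻¹ • (ContinuousLinearMap.proj i).comp
              (ContinuousLinearMap.snd ℝ (Fin d → ℝ) (Fin d → ℝ)))) z := by
  refine hasFDerivAt_snd.neg.prodMk (hasFDerivAt_pi.2 fun i => ?_)
  simp only [div_eq_mul_inv]
  exact ((differentiable_gradU hU i z.1).hasFDerivAt.comp z hasFDerivAt_fst).sub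
    ((hasFDerivAt_pi'.1 hasFDerivAt_snd i).mul_const σ⁻¹)

theorem dirDeriv_langevinDrift {U : (Fin d → ℝ) → ℝ} (hU : ContDiff ℝ 2 U) (σ : ℝ)
    (v z : (Fin d → ℝ) × (Fin d → ℝ)) :
    dirDeriv v (langevinDrift U σ) z =
      (-v.2, fun i => fderiv ℝ (gradU U i) z.1 v.1 - v.2 i / σ) := by
  rw [dirDeriv, (hasFDerivAt_langevinDrift hU σ z).fderiv]
  ext i <;> simp [div_eq_inv_mul]

theorem dirDeriv_dirDeriv_xDir_langevinDrift {U : (Fin d → ℝ) → ℝ} (hU : ContDiff ℝ 2 U) (σ : ℝ)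
    (f : (Fin d → ℝ) × (Fin d → ℝ) → ℝ) (i : Fin d) (z : (Fin d → ℝ) × (Fin d → ℝ)) :
    dirDeriv (dirDeriv (xDir i) (langevinDrift U σ) z) f z =
      ∑ j, hessU U i j z.1 * pdy j f z := by
  rw [dirDeriv_langevinDrift hU, dirDeriv_eq_sum_pdx_add_sum_pdy]
  simp only [xDir, Pi.neg_apply, Pi.zero_apply, neg_zero, zero_mul, sum_const_zero, zero_add,
    zero_div, sub_zero]
  rfl

theorem dirDeriv_dirDeriv_yDir_langevinDrift {U : (Fin d → ℝ) → ℝ} (hU : ContDiff ℝ 2 U) (σ : ℝ)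
    (f : (Fin d → ℝ) × (Fin d → ℝ) → ℝ) (i : Fin d) (z : (Fin d → ℝ) × (Fin d → ℝ)) :
    dirDeriv (dirDeriv (yDir i) (langevinDrift U σ) z) f z =
      -pdx i f z - 1 / σ * pdy i f z := by
  rw [dirDeriv_langevinDrift hU, dirDeriv_eq_sum_pdx_add_sum_pdy]
  simp [yDir, Pi.single_apply, ite_div, sub_eq_add_neg]

theorem half_langevin_sq_norm_grad_sub {U : (Fin d → ℝ) → ℝ} (hU : ContDiff ℝ 2 U) (σ : ℝ)
    {h : (Fin d → ℝ) × (Fin d → ℝ) → ℝ} (hh : ContDiff ℝ 3 h) (z : (Fin d → ℝ) × (Fin d → ℝ)) :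
    1 / 2 * langevin U σ (fun w => ∑ i, pdx i h w ^ 2 + ∑ i, pdy i h w ^ 2) z -
        (∑ i, pdx i h z * pdx i (langevin U σ h) z + ∑ i, pdy i h z * pdy i (langevin U σ h) z) =
      ∑ i, ∑ k, pdy k (pdx i h) z ^ 2 + ∑ i, ∑ k, pdy k (pdy i h) z ^ 2 -
        ∑ i, ∑ j, pdx i h z * (hessU U i j z.1 * pdy j h z) +
        ∑ i, pdx i h z * pdy i h z + 1 / σ * ∑ i, pdy i h z ^ 2 := by
  have pdx_eq (i : Fin d) : dirDeriv (xDir i) = pdx i := rfl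
  have pdy_eq (i : Fin d) : dirDeriv (yDir i) = pdy i := rfl
  have identity := half_diffusionOp_sum_sq_dirDeriv_sub (e := yDir) (Sum.elim xDir yDir)
    (hasFDerivAt_langevinDrift hU σ z).differentiableAt hh
  simp only [← langevin_eq_diffusionOp, Fintype.sum_sum_type, Sum.elim_inl, Sum.elim_inr,
    dirDeriv_dirDeriv_xDir_langevinDrift hU, dirDeriv_dirDeriv_yDir_langevinDrift hU,
    pdx_eq, pdy_eq] at identity
  have drift_y : ∑ i, pdy i h z * (-pdx i h z - 1 / σ * pdy i h z) =
      -∑ i, pdx i h z * pdy i h z - 1 / σ * ∑ i, pdy i h z ^ 2 := by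
    rw [mul_sum, ← sum_neg_distrib, ← sum_sub_distrib]
    exact sum_congr rfl fun i _ => by ring
  rw [identity, drift_y]
  simp only [mul_sum]
  ring

end Langevin

theorem stmt3_general {d : ℕ} {U : (Fin d → ℝ) → ℝ} (hU : ContDiff ℝ 2 U) {σ : ℝ} (hσ : 0 < σ)
    {h : (Fin d → ℝ) × (Fin d → ℝ) → ℝ} (hh : ContDiff ℝ 3 h)
    (z : (Fin d → ℝ) × (Fin d → ℝ)) :
    (1 / 2) * langevin U σ
        (fun w => (∑ i, (pdx i h w) ^ 2) + ∑ i, (pdy i h w) ^ 2) z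
        - ((∑ i, pdx i h z * pdx i (langevin U σ h) z)
            + ∑ i, pdy i h z * pdy i (langevin U σ h) z)
      ≥ -(1 / 2 * (√(∑ i, ∑ j, hessU U i j z.1 ^ 2) + 1))
          * ((∑ i, (pdx i h z) ^ 2) + ∑ i, (pdy i h z) ^ 2) := by
  have hess_bound := sum_sum_mul_le_sqrt_sum_sq (fun i j => hessU U i j z.1)
    (fun i => pdx i h z) (fun j => pdy j h z)
  have cross_bound :
      -(1 / 2 * (∑ i, pdx i h z ^ 2 + ∑ i, pdy i h z ^ 2)) ≤ ∑ i, pdx i h z * pdy i h z := by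
    rw [← sum_add_distrib, mul_sum, ← sum_neg_distrib]
    exact sum_le_sum fun i _ => by linarith [sq_nonneg (pdx i h z + pdy i h z)]
  have snd_x_nonneg : 0 ≤ ∑ i, ∑ k, pdy k (pdx i h) z ^ 2 := by positivity
  have snd_y_nonneg : 0 ≤ ∑ i, ∑ k, pdy k (pdy i h) z ^ 2 := by positivity
  have friction_nonneg : 0 ≤ 1 / σ * ∑ i, pdy i h z ^ 2 := by positivity
  rw [half_langevin_sq_norm_grad_sub hU σ hh z]
  linarith

/-- For the kinetic Langevin operator and the quadratic functional Φ(h) = |∇h|²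
(full gradient in the 2d variables), pointwise
(1/2)L(|∇h|²) − ∇h·∇(Lh) ≥ −(‖∇²U‖_∞ + 1 + 1/σ)|∇h|². -/
theorem stmt3 {d : ℕ} (U : (Fin d → ℝ) → ℝ) (hU : ContDiff ℝ (⊤ : ℕ∞) U)
    (hK : BddAbove (Set.range fun x : Fin d → ℝ =>
      Real.sqrt (∑ i, ∑ j, (hessU U i j x) ^ 2)))
    (σ : ℝ) (hσ : 0 < σ)
    (h : (Fin d → ℝ) × (Fin d → ℝ) → ℝ) (hh : ContDiff ℝ (⊤ : ℕ∞) h)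
    (z : (Fin d → ℝ) × (Fin d → ℝ)) :
    (1 / 2) * langevin U σ
        (fun w => (∑ i, (pdx i h w) ^ 2) + ∑ i, (pdy i h w) ^ 2) z
        - ((∑ i, pdx i h z * pdx i (langevin U σ h) z)
            + ∑ i, pdy i h z * pdy i (langevin U σ h) z)
      ≥ -(hessNormInf U + 1 + 1 / σ)
          * ((∑ i, (pdx i h z) ^ 2) + ∑ i, (pdy i h z) ^ 2) := by
  have hess_le : √(∑ i, ∑ j, hessU U i j z.1 ^ 2) ≤ hessNormInf U := le_ciSup hK z.1
  refine (mul_le_mul_of_nonneg_right ?_ (by positivity)).trans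
    (stmt3_general (contDiff_infty.1 hU 2) hσ (contDiff_infty.1 hh 3) z)
  linarith [Real.sqrt_nonneg (∑ i, ∑ j, hessU U i j z.1 ^ 2), one_div_pos.2 hσ]
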